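/- Let D be a unique factorization domain admitting a prime element p with D/pD finite. Then Int(D) is not a unique factorization domain; indeed, for every positive integer k and all integers 1 < n_1 ≤ ... ≤ n_k there exists H ∈ Int(D) with exactly k essentially different factorizations into irreducibles of Int(D), of lengths exactly n_1, ..., n_k. -/

import Mathlib

open Polynomial

/-- The ring of integer-valued polynomials `Int(D) ⊆ K[X]`. -/
noncomputable def IntPolySubring (D K : Type*) [CommRing D] [CommRing K] [Algebra D K] :
    Subring (Polynomial K) :=
  ⨅ a : D, Subring.comap (Polynomial.evalRingHom (algebraMap D K a)) (algebraMap D K).range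

/-!
Fix `e > 0` and polynomials `q` (the pivot) and `f i` (`i ∈ U`) of `D[X]`, irreducible over `K` and
with no two of the `f i` associated, such that `p ^ e` divides every value of `q * ∏ i ∈ U, f i`.
If their values at `0` are powers of `p` while `q 1 = p ^ e` and no `f i 1` is divisible by `p`,
then an element of `Int(D)` built from the `f i` alone has no denominator, and with the factor `q`
its denominator is at most `p ^ e`. Hence every factorization of `p⁻ᵉ * q * ∏ i ∈ U, f i` in
`Int(D)` has exactly one factor divisible by `q`, which absorbs the whole denominator, and the other
factors are among the `f i`: the factorizations correspond to the minimal sets `T` for which `p ^ e`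
divides all values of `q * ∏ i ∈ T, f i`, and have length `|U \ T| + 1`.

To prescribe these minimal sets, let `q` take care of the residue class of `1` modulo `p`, one `f`
of each further nonzero residue class, and let the remaining ones, `X ^ m + p ^ d j`, contribute
`p ^ d j` on the class of `0`. The condition on `T` becomes a knapsack condition `e ≤ ∑ d j`, and
suitable weights `d j`, among them powers of two, realise any prescribed lengths. The polynomials
for nonzero classes are reversals of `(X - a) ^ m + p ^ e`, since reversing makes the value at `0`
equal to `1`.
-/

section Reverse

variable {R : Type*}

section Semiring

variable [Semiring R]

theorem reverse_add_C_eq (f : R[X]) (c : R) :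
    (f + C c).reverse = f.reverse + C c * X ^ f.natDegree := by
  rw [reverse, natDegree_add_C, reflect_add, reflect_C, reverse]

theorem natDegree_reverse_of_coeff_zero_ne_zero {f : R[X]} (h : f.coeff 0 ≠ 0) :
    f.reverse.natDegree = f.natDegree := by
  rw [reverse_natDegree, natTrailingDegree_eq_zero.2 (Or.inr h), Nat.sub_zero]

theorem reverse_reverse_of_coeff_zero_ne_zero {f : R[X]} (h : f.coeff 0 ≠ 0) :
    f.reverse.reverse = f := by
  ext n
  rw [coeff_reverse, coeff_reverse, natDegree_reverse_of_coeff_zero_ne_zero h, revAt_invol]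

variable [NoZeroDivisors R]

theorem reverse_pow_of_noZeroDivisors (f : R[X]) (m : ℕ) : (f ^ m).reverse = f.reverse ^ m := by
  induction m with
  | zero => rw [pow_zero, pow_zero, ← C_1, reverse_C]
  | succ m ih => rw [pow_succ, pow_succ, reverse_mul_of_domain, ih]

theorem isUnit_of_isUnit_reverse {f : R[X]} (h : f.coeff 0 ≠ 0) (hf : IsUnit f.reverse) :
    IsUnit f := by
  have hdeg : f.natDegree = 0 := by
    rw [← natDegree_reverse_of_coeff_zero_ne_zero h, natDegree_eq_zero_of_isUnit hf]
  have hC : f = C (f.coeff 0) := eq_C_of_natDegree_eq_zero hdeg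
  rw [hC, reverse_C] at hf
  rwa [hC]

theorem irreducible_reverse {f : R[X]} (h : f.coeff 0 ≠ 0) (hf : Irreducible f) :
    Irreducible f.reverse := by
  refine ⟨fun hu => hf.not_isUnit (isUnit_of_isUnit_reverse h hu), fun a b hab => ?_⟩
  have hab0 : a.coeff 0 * b.coeff 0 ≠ 0 := by
    rw [← mul_coeff_zero, ← hab, coeff_zero_reverse]
    exact leadingCoeff_ne_zero.2 hf.ne_zero
  have hfab : f = a.reverse * b.reverse := by
    rw [← reverse_mul_of_domain, ← hab, reverse_reverse_of_coeff_zero_ne_zero h]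
  exact (hf.isUnit_or_isUnit hfab).imp (isUnit_of_isUnit_reverse (left_ne_zero_of_mul hab0))
    (isUnit_of_isUnit_reverse (right_ne_zero_of_mul hab0))

end Semiring

variable [CommRing R]

/-- The reversal of `(X - a) ^ m + c`. It is `1` at `0` and a power of `1 - a * X` modulo `c`, so it
serves to single out one nonzero residue class. -/
noncomputable def residuePoly (c a : R) (m : ℕ) : R[X] :=
  (1 - C a * X) ^ m + C c * X ^ m

theorem eval_residuePoly (c a : R) (m : ℕ) (b : R) :
    (residuePoly c a m).eval b = (1 - a * b) ^ m + c * b ^ m := by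
  simp [residuePoly]

theorem map_residuePoly {S : Type*} [CommRing S] (φ : R →+* S) (c a : R) (m : ℕ) :
    (residuePoly c a m).map φ = residuePoly (φ c) (φ a) m := by
  simp [residuePoly]

theorem coeff_zero_X_sub_C_pow_add_C (c a : R) (m : ℕ) :
    ((X - C a) ^ m + C c).coeff 0 = (-a) ^ m + c := by
  simp [coeff_zero_eq_eval_zero]

variable [IsDomain R]

theorem reverse_X_sub_C (a : R) : (X - C a).reverse = 1 - C a * X := by
  rw [sub_eq_add_neg, ← C_neg, reverse_add_C_eq, natDegree_X, pow_one, C_neg, neg_mul,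
    ← sub_eq_add_neg, ← one_mul X, reverse_mul_X, ← C_1, reverse_C, C_1, one_mul]

theorem reverse_X_sub_C_pow_add_C (c a : R) (m : ℕ) :
    ((X - C a) ^ m + C c).reverse = residuePoly c a m := by
  rw [reverse_add_C_eq, reverse_pow_of_noZeroDivisors, reverse_X_sub_C,
    (monic_X_sub_C a).natDegree_pow, natDegree_X_sub_C, mul_one, residuePoly]

theorem natDegree_residuePoly {c a : R} {m : ℕ} (h : (-a) ^ m + c ≠ 0) :
    (residuePoly c a m).natDegree = m := by
  rw [← reverse_X_sub_C_pow_add_C,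
    natDegree_reverse_of_coeff_zero_ne_zero (by rwa [coeff_zero_X_sub_C_pow_add_C]),
    natDegree_add_C, (monic_X_sub_C a).natDegree_pow, natDegree_X_sub_C, mul_one]

theorem irreducible_residuePoly {c a : R} {m : ℕ} (h : (-a) ^ m + c ≠ 0)
    (hirr : Irreducible ((X - C a) ^ m + C c)) : Irreducible (residuePoly c a m) :=
  reverse_X_sub_C_pow_add_C c a m ▸
    irreducible_reverse (by rwa [coeff_zero_X_sub_C_pow_add_C]) hirr

end Reverse

section PrimePower

variable {D K : Type*} [CommRing D] {p : D}

theorem neg_pow_add_prime_pow_ne_zero (hp : Prime p) {a : D} (ha : ¬ p ∣ a) (m : ℕ) {d : ℕ}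
    (hd : d ≠ 0) : (-a) ^ m + p ^ d ≠ 0 := fun h0 =>
  have hdvd : p ∣ (-a) ^ m := by
    rw [eq_neg_of_add_eq_zero_left h0]
    exact (dvd_pow_self p hd).neg_right
  ha (dvd_neg.1 (hp.dvd_of_dvd_pow hdvd))

variable [IsDomain D] [Field K] [Algebra D K] [IsFractionRing D K]

theorem algebraMap_prime_pow_ne_zero (hp : Prime p) (d : ℕ) : algebraMap D K (p ^ d) ≠ 0 :=
  (map_ne_zero_iff _ (IsFractionRing.injective D K)).2 (pow_ne_zero d hp.ne_zero)

variable [IsIntegrallyClosed D]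

theorem irreducible_X_pow_add_C_prime_pow (hp : Prime p) {m d : ℕ} (hm : m.Prime) (hd : d ≠ 0)
    (hdm : d < m) : Irreducible (X ^ m + C (algebraMap D K (p ^ d))) := by
  rw [← neg_neg (algebraMap D K (p ^ d)), C_neg, ← sub_eq_add_neg]
  refine X_pow_sub_C_irreducible_of_prime hm fun x hx => ?_
  rw [← map_neg] at hx
  obtain ⟨y, rfl⟩ := IsIntegrallyClosed.exists_algebraMap_eq_of_isIntegral_pow (R := D) hm.pos
    (hx ▸ isIntegral_algebraMap)
  have hy : y ^ m = -p ^ d := IsFractionRing.injective D K (by rw [map_pow, hx])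
  have hpy : p ∣ y := hp.dvd_of_dvd_pow (hy ▸ (dvd_pow_self p hd).neg_right)
  have hpow : p ^ m ∣ p ^ d := dvd_neg.1 (hy ▸ pow_dvd_pow_of_dvd hpy m)
  exact hdm.not_ge ((pow_dvd_pow_iff hp.ne_zero hp.not_isUnit).1 hpow)

theorem irreducible_X_sub_C_pow_add_C_prime_pow (hp : Prime p) {m d : ℕ} (hm : m.Prime)
    (hd : d ≠ 0) (hdm : d < m) (a : K) :
    Irreducible ((X - C a) ^ m + C (algebraMap D K (p ^ d))) := by
  have h := (MulEquiv.irreducible_iff (taylorEquiv (-a))).2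
    (irreducible_X_pow_add_C_prime_pow (K := K) hp hm hd hdm)
  simpa [sub_eq_add_neg, taylorEquiv] using h

theorem irreducible_map_residuePoly_prime_pow (hp : Prime p) {m d : ℕ} (hm : m.Prime) (hd : d ≠ 0)
    (hdm : d < m) {a : D} (ha : ¬ p ∣ a) :
    Irreducible ((residuePoly (p ^ d) a m).map (algebraMap D K)) := by
  have h0 : (-algebraMap D K a) ^ m + algebraMap D K (p ^ d) ≠ 0 := by
    rw [← map_neg, ← map_pow, ← map_add]
    exact (map_ne_zero_iff _ (IsFractionRing.injective D K)).2
      (neg_pow_add_prime_pow_ne_zero hp ha m hd)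
  rw [map_residuePoly]
  exact irreducible_residuePoly h0 (irreducible_X_sub_C_pow_add_C_prime_pow hp hm hd hdm _)

end PrimePower

/-- `L` lists the essentially different factorizations of `H` into irreducibles, each exactly once
up to order and associates. -/
structure IsFactorizationList {M κ : Type*} [CommMonoid M] (H : M) (L : κ → Multiset M) :
    Prop where
  irreducible : ∀ i, ∀ g ∈ L i, Irreducible g
  prod_eq : ∀ i, (L i).prod = H
  not_rel : ∀ i j, i ≠ j → ¬ Multiset.Rel Associated (L i) (L j)
  exists_rel : ∀ s : Multiset M, (∀ g ∈ s, Irreducible g) → s.prod = H →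
    ∃ i, Multiset.Rel Associated s (L i)

theorem IsFactorizationList.subsingleton_of_uniqueFactorizationMonoid {M κ : Type*}
    [CommMonoidWithZero M] [UniqueFactorizationMonoid M] {H : M} {L : κ → Multiset M}
    (h : IsFactorizationList H L) : Subsingleton κ := by
  refine ⟨fun i j => by_contra fun hij => h.not_rel i j hij ?_⟩
  refine UniqueFactorizationMonoid.factors_unique (h.irreducible i) (h.irreducible j) ?_
  rw [h.prod_eq i, h.prod_eq j]

namespace IntPolySubring

section CommRing

variable {D K : Type*} [CommRing D] [CommRing K] [Algebra D K]

theorem mem_iff {f : K[X]} :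
    f ∈ IntPolySubring D K ↔ ∀ b : D, f.eval (algebraMap D K b) ∈ (algebraMap D K).range := by
  simp [IntPolySubring, Subring.mem_iInf]

theorem map_mem (f : D[X]) : f.map (algebraMap D K) ∈ IntPolySubring D K :=
  mem_iff.2 fun b => ⟨f.eval b, (eval_map_apply _ b).symm⟩

variable (K) in
/-- The inclusion `D[X] ⊆ Int(D)`. -/
noncomputable def ofPoly : D[X] →+* IntPolySubring D K :=
  (mapRingHom (algebraMap D K)).codRestrict _ map_mem

@[simp]
theorem coe_ofPoly (f : D[X]) : (ofPoly K f : K[X]) = f.map (algebraMap D K) := rfl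

theorem mul_eval_mem_range {c : K} {f : D[X]}
    (h : C c * f.map (algebraMap D K) ∈ IntPolySubring D K) (b : D) :
    c * algebraMap D K (f.eval b) ∈ (algebraMap D K).range := by
  simpa only [eval_mul, eval_C, eval_map_apply] using mem_iff.1 h b

theorem associated_of_eq_C_mul {g h : IntPolySubring D K} {u : D} (hu : IsUnit u)
    (hg : (g : K[X]) = C (algebraMap D K u) * h) : Associated g h := by
  have hgh : g = ofPoly K (C u) * h := Subtype.ext (by simpa using hg)
  exact hgh ▸ associated_unit_mul_left h _ ((hu.map C).map (ofPoly K))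

theorem coe_associated {g h : IntPolySubring D K} (hgh : Associated g h) :
    Associated (g : K[X]) h :=
  hgh.map (IntPolySubring D K).subtype

end CommRing

variable {D K : Type*} [CommRing D] [IsDomain D] [Field K] [Algebra D K] [IsFractionRing D K]
  {p : D}

theorem mem_range_of_mul_mem_range (hp : Prime p) {c : K} {u w : D} (hu : u ∈ Submonoid.powers p)
    (hw : ¬ p ∣ w) (hcu : c * algebraMap D K u ∈ (algebraMap D K).range)
    (hcw : c * algebraMap D K w ∈ (algebraMap D K).range) : c ∈ (algebraMap D K).range := by
  obtain ⟨k, rfl⟩ := hu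
  obtain ⟨x, hx⟩ := hcu
  obtain ⟨y, hy⟩ := hcw
  have hxy : x * w = y * p ^ k := by
    refine IsFractionRing.injective D K ?_
    rw [map_mul, map_mul, hx, hy]
    ring
  obtain ⟨z, rfl⟩ := hp.pow_dvd_of_dvd_mul_right k hw (Dvd.intro_left y hxy.symm)
  refine ⟨z, ?_⟩
  exact mul_right_cancel₀ (algebraMap_prime_pow_ne_zero hp k) (by rw [← map_mul, mul_comm, hx])

end IntPolySubring

theorem exists_subset_of_mul_eq_C_mul_prod {K ι : Type*} [Field K] [DecidableEq ι]
    {f : ι → K[X]} {U : Finset ι} (hf : ∀ i ∈ U, Irreducible (f i)) {g h : K[X]} {a : K}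
    (ha : a ≠ 0) (hgh : g * h = C a * ∏ i ∈ U, f i) :
    ∃ T ⊆ U, ∃ b c : K, b * c = a ∧ g = C b * ∏ i ∈ T, f i ∧ h = C c * ∏ i ∈ U \ T, f i := by
  obtain ⟨T, V, b, c, rfl, hTV, hbc, hg, hh⟩ :=
    mul_eq_mul_prime_prod (fun i hi => (hf i hi).prime) hgh
  have hunit : IsUnit (b * c) := hbc ▸ isUnit_C.2 ha.isUnit
  obtain ⟨b, -, rfl⟩ := isUnit_iff.1 (isUnit_of_mul_isUnit_left hunit)
  obtain ⟨c, -, rfl⟩ := isUnit_iff.1 (isUnit_of_mul_isUnit_right hunit)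
  refine ⟨T, Finset.subset_union_left, b, c, C_injective ?_, hg, ?_⟩
  · rw [C_mul, hbc]
  · rw [hh, Finset.union_sdiff_cancel_left hTV]

/-- A family of polynomials of `D[X]`, irreducible over `K`, together with a pivot whose value at
`1` is `p ^ e`. The values at `0` and `1` are arranged so that a denominator in `Int(D)` can only
divide a product which contains the pivot, and is then at most `p ^ e`. -/
structure PivotFamily (D K : Type*) [CommRing D] [Field K] [Algebra D K] (p : D) (e : ℕ)
    (ι : Type*) where
  pivot : D[X]
  poly : ι → D[X]
  prime : Prime p
  irreducible_pivot : Irreducible (pivot.map (algebraMap D K))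
  irreducible_poly : ∀ i, Irreducible ((poly i).map (algebraMap D K))
  eq_of_associated : ∀ i j,
    Associated ((poly i).map (algebraMap D K)) ((poly j).map (algebraMap D K)) → i = j
  eval_zero_pivot : pivot.eval 0 ∈ Submonoid.powers p
  eval_zero_poly : ∀ i, (poly i).eval 0 ∈ Submonoid.powers p
  eval_one_pivot : pivot.eval 1 = p ^ e
  not_dvd_eval_one_poly : ∀ i, ¬ p ∣ (poly i).eval 1

namespace PivotFamily

open IntPolySubring

variable {D K : Type*} [CommRing D] [Field K] [Algebra D K] {p : D} {e : ℕ} {ι : Type*}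
  (F : PivotFamily D K p e ι) {S T U : Finset ι}

/-- The product of the members of the family indexed by `S`. -/
noncomputable def prod (S : Finset ι) : D[X] := ∏ i ∈ S, F.poly i

/-- A set of indices is full when all values of the product of the pivot with the corresponding
members of the family are divisible by `p ^ e`. -/
def Full (T : Finset ι) : Prop := ∀ b : D, p ^ e ∣ (F.pivot * F.prod T).eval b

theorem map_prod_eq (S : Finset ι) :
    (F.prod S).map (algebraMap D K) = ∏ i ∈ S, (F.poly i).map (algebraMap D K) :=
  Polynomial.map_prod _ _ _

theorem eval_pivot_mul_prod (S : Finset ι) (b : D) :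
    (F.pivot * F.prod S).eval b = F.pivot.eval b * ∏ i ∈ S, (F.poly i).eval b := by
  rw [eval_mul, prod, eval_prod]

theorem eval_zero_prod_mem_powers (S : Finset ι) : (F.prod S).eval 0 ∈ Submonoid.powers p := by
  rw [prod, eval_prod]
  exact Submonoid.prod_mem _ fun i _ => F.eval_zero_poly i

theorem not_dvd_eval_one_prod (S : Finset ι) : ¬ p ∣ (F.prod S).eval 1 := by
  rw [prod, eval_prod, F.prime.dvd_finsetProd_iff]
  exact fun ⟨i, _, hi⟩ => F.not_dvd_eval_one_poly i hi

theorem prod_mul_prod_sdiff [DecidableEq ι] (h : T ⊆ U) :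
    F.prod T * F.prod (U \ T) = F.prod U := by
  rw [mul_comm]
  exact Finset.prod_sdiff h

variable {F} in
theorem Full.mono (hT : F.Full T) (h : T ⊆ U) : F.Full U := fun b => by
  classical
  rw [← F.prod_mul_prod_sdiff h, ← mul_assoc, eval_mul]
  exact (hT b).mul_right _

theorem eq_empty_of_isUnit_ofPoly_prod (h : IsUnit (ofPoly K (F.prod S))) : S = ∅ := by
  refine Finset.eq_empty_of_forall_notMem fun i hi => (F.irreducible_poly i).not_isUnit ?_
  refine isUnit_of_dvd_unit ?_ (h.map (IntPolySubring D K).subtype)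
  exact Polynomial.map_dvd _ (Finset.dvd_prod_of_mem F.poly hi)

variable [IsDomain D] [IsFractionRing D K]

/-- The integer-valued polynomial `p⁻ᵉ * pivot * ∏ i ∈ T, poly i` attached to a full set `T`. -/
noncomputable def divided (hT : F.Full T) : IntPolySubring D K :=
  ⟨C (algebraMap D K (p ^ e))⁻¹ * (F.pivot * F.prod T).map (algebraMap D K), mem_iff.2 fun b => by
    obtain ⟨z, hz⟩ := hT b
    refine ⟨z, ?_⟩
    rw [eval_mul, eval_C, eval_map_apply, hz, map_mul,
      inv_mul_cancel_left₀ (algebraMap_prime_pow_ne_zero F.prime e)]⟩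

theorem coe_divided (hT : F.Full T) : (F.divided hT : K[X]) =
    C (algebraMap D K (p ^ e))⁻¹ * (F.pivot * F.prod T).map (algebraMap D K) := rfl

theorem divided_mul_ofPoly_prod_sdiff [DecidableEq ι] (hT : F.Full T) (hU : F.Full U)
    (h : T ⊆ U) : F.divided hT * ofPoly K (F.prod (U \ T)) = F.divided hU := by
  refine Subtype.ext ?_
  rw [Subring.coe_mul, coe_ofPoly, coe_divided, coe_divided, mul_assoc, ← Polynomial.map_mul,
    mul_assoc F.pivot, F.prod_mul_prod_sdiff h]

theorem mul_coe_divided (hT : F.Full T) : C (algebraMap D K (p ^ e)) * (F.divided hT : K[X]) =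
    F.pivot.map (algebraMap D K) * (F.prod T).map (algebraMap D K) := by
  rw [coe_divided, ← mul_assoc, ← C_mul, mul_inv_cancel₀ (algebraMap_prime_pow_ne_zero F.prime e),
    C_1, one_mul, Polynomial.map_mul]

theorem map_pivot_dvd_divided (hT : F.Full T) :
    F.pivot.map (algebraMap D K) ∣ (F.divided hT : K[X]) := by
  rw [coe_divided, Polynomial.map_mul]
  exact (dvd_mul_right _ _).mul_left _

theorem not_isUnit_divided (hT : F.Full T) : ¬ IsUnit (F.divided hT) := fun h =>
  F.irreducible_pivot.not_isUnit (isUnit_of_dvd_unit (F.map_pivot_dvd_divided hT)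
    (h.map (IntPolySubring D K).subtype))

theorem mem_range_of_C_mul_prod_mem {c : K}
    (h : C c * (F.prod S).map (algebraMap D K) ∈ IntPolySubring D K) :
    c ∈ (algebraMap D K).range :=
  mem_range_of_mul_mem_range F.prime (F.eval_zero_prod_mem_powers S) (F.not_dvd_eval_one_prod S)
    (mul_eval_mem_range h 0) (mul_eval_mem_range h 1)

theorem mul_mem_range_of_C_mul_pivot_mul_prod_mem {c : K}
    (h : C c * (F.pivot * F.prod S).map (algebraMap D K) ∈ IntPolySubring D K) :
    c * algebraMap D K (p ^ e) ∈ (algebraMap D K).range := by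
  refine mem_range_of_mul_mem_range F.prime (u := (F.pivot * F.prod S).eval 0) ?_
    (F.not_dvd_eval_one_prod S) ?_ ?_
  · rw [eval_mul]
    exact mul_mem F.eval_zero_pivot (F.eval_zero_prod_mem_powers S)
  · rw [mul_right_comm]
    exact mul_mem (mul_eval_mem_range h 0) ⟨p ^ e, rfl⟩
  · simpa only [eval_mul, F.eval_one_pivot, map_mul, mul_assoc] using mul_eval_mem_range h 1

theorem exists_associated_of_mul_eq_ofPoly_prod [DecidableEq ι] {g h : IntPolySubring D K}
    (hgh : g * h = ofPoly K (F.prod U)) :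
    ∃ T ⊆ U, Associated g (ofPoly K (F.prod T)) ∧ Associated h (ofPoly K (F.prod (U \ T))) := by
  have hcoe : (g : K[X]) * (h : K[X]) = C 1 * ∏ i ∈ U, (F.poly i).map (algebraMap D K) := by
    rw [← Subring.coe_mul, hgh, coe_ofPoly, F.map_prod_eq, C_1, one_mul]
  obtain ⟨T, hTU, b, c, hbc, hg, hh⟩ :=
    exists_subset_of_mul_eq_C_mul_prod (fun i _ => F.irreducible_poly i) one_ne_zero hcoe
  rw [← F.map_prod_eq] at hg hh
  obtain ⟨b, rfl⟩ := F.mem_range_of_C_mul_prod_mem (hg ▸ g.2)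
  obtain ⟨c, rfl⟩ := F.mem_range_of_C_mul_prod_mem (hh ▸ h.2)
  have hbc' : b * c = 1 := IsFractionRing.injective D K (by rw [map_mul, hbc, map_one])
  exact ⟨T, hTU, associated_of_eq_C_mul (.of_mul_eq_one _ hbc') hg,
    associated_of_eq_C_mul (.of_mul_eq_one_right _ hbc') hh⟩

theorem exists_associated_of_mul_eq_divided [DecidableEq ι] (hU : F.Full U)
    {g h : IntPolySubring D K} (hgh : g * h = F.divided hU)
    (hpivot : F.pivot.map (algebraMap D K) ∣ (g : K[X])) :
    ∃ T ⊆ U, ∃ hT : F.Full T,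
      Associated g (F.divided hT) ∧ Associated h (ofPoly K (F.prod (U \ T))) := by
  have hpe := algebraMap_prime_pow_ne_zero (K := K) F.prime e
  obtain ⟨g', hg'⟩ := hpivot
  have hcoe : g' * (h : K[X]) =
      C (algebraMap D K (p ^ e))⁻¹ * ∏ i ∈ U, (F.poly i).map (algebraMap D K) := by
    refine mul_left_cancel₀ F.irreducible_pivot.ne_zero ?_
    rw [← mul_assoc, ← hg', ← Subring.coe_mul, hgh, coe_divided, Polynomial.map_mul, F.map_prod_eq]
    ring
  obtain ⟨T, hTU, b, c, hbc, hg, hh⟩ := exists_subset_of_mul_eq_C_mul_prod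
    (fun i _ => F.irreducible_poly i) (inv_ne_zero hpe) hcoe
  rw [← F.map_prod_eq] at hg hh
  have hg : (g : K[X]) = C b * (F.pivot * F.prod T).map (algebraMap D K) := by
    rw [hg', hg, Polynomial.map_mul, mul_left_comm]
  obtain ⟨c, rfl⟩ := F.mem_range_of_C_mul_prod_mem (hh ▸ h.2)
  obtain ⟨x, hx⟩ := F.mul_mem_range_of_C_mul_pivot_mul_prod_mem (hg ▸ g.2)
  have hb : b = (algebraMap D K (p ^ e))⁻¹ * algebraMap D K x := by
    rw [hx, mul_comm, mul_inv_cancel_right₀ hpe]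
  have hxc : x * c = 1 := IsFractionRing.injective D K <| by
    rw [map_mul, hx, mul_right_comm, hbc, inv_mul_cancel₀ hpe, map_one]
  have hT : F.Full T := fun d => by
    obtain ⟨z, hz⟩ := mul_eval_mem_range (hg ▸ g.2) d
    refine ⟨c * z, IsFractionRing.injective D K ?_⟩
    rw [map_mul, map_mul, hz, ← mul_assoc, ← mul_assoc, mul_assoc (algebraMap D K (p ^ e)),
      mul_comm (algebraMap D K c), hbc, mul_inv_cancel₀ hpe, one_mul]
  refine ⟨T, hTU, hT, associated_of_eq_C_mul (.of_mul_eq_one _ hxc) ?_,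
    associated_of_eq_C_mul (.of_mul_eq_one_right _ hxc) hh⟩
  rw [hg, coe_divided, hb, C_mul]
  ring

theorem irreducible_ofPoly_poly (i : ι) : Irreducible (ofPoly K (F.poly i)) := by
  classical
  have hi : F.prod {i} = F.poly i := Finset.prod_singleton _ _
  refine ⟨fun h => (F.irreducible_poly i).not_isUnit (h.map (IntPolySubring D K).subtype),
    fun g h hgh => ?_⟩
  rw [← hi] at hgh
  obtain ⟨T, hT, hg, hh⟩ := F.exists_associated_of_mul_eq_ofPoly_prod hgh.symm
  rcases Finset.subset_singleton_iff.1 hT with rfl | rfl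
  · exact .inl (associated_one_iff_isUnit.1 (by simpa [prod] using hg))
  · exact .inr (associated_one_iff_isUnit.1 (by simpa [prod] using hh))

theorem isUnit_right_of_mul_eq_divided (hT : Minimal F.Full T) {g h : IntPolySubring D K}
    (hgh : g * h = F.divided hT.prop) (hpivot : F.pivot.map (algebraMap D K) ∣ (g : K[X])) :
    IsUnit h := by
  classical
  obtain ⟨S, hST, hS, -, hh⟩ := F.exists_associated_of_mul_eq_divided hT.prop hgh hpivot
  rw [hT.eq_of_le hS hST, sdiff_self] at hh
  exact associated_one_iff_isUnit.1 (by simpa [prod] using hh)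

theorem irreducible_divided (hT : Minimal F.Full T) : Irreducible (F.divided hT.prop) := by
  refine ⟨F.not_isUnit_divided hT.prop, fun g h hgh => ?_⟩
  have hdvd := F.map_pivot_dvd_divided hT.prop
  rw [hgh, Subring.coe_mul] at hdvd
  rcases F.irreducible_pivot.prime.dvd_or_dvd hdvd with hg | hh
  · exact .inr (F.isUnit_right_of_mul_eq_divided hT hgh.symm hg)
  · exact .inl (F.isUnit_right_of_mul_eq_divided hT (by rw [mul_comm, hgh]) hh)

theorem minimal_of_irreducible_divided (hT : F.Full T) (hirr : Irreducible (F.divided hT)) :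
    Minimal F.Full T := by
  classical
  refine ⟨hT, fun S hS hST => ?_⟩
  have hsplit := F.divided_mul_ofPoly_prod_sdiff hS hT hST
  have hunit := (hirr.isUnit_or_isUnit hsplit.symm).resolve_left (F.not_isUnit_divided hS)
  exact Finset.sdiff_eq_empty_iff_subset.1 (F.eq_empty_of_isUnit_ofPoly_prod hunit)

theorem exists_eq_singleton_of_irreducible_ofPoly_prod (h : Irreducible (ofPoly K (F.prod S))) :
    ∃ i, S = {i} := by
  classical
  obtain ⟨i, hi⟩ : S.Nonempty := Finset.nonempty_iff_ne_empty.2 <| by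
    rintro rfl
    exact h.not_isUnit (by simp [prod])
  have hsplit : ofPoly K (F.prod S) = ofPoly K (F.poly i) * ofPoly K (F.prod (S.erase i)) := by
    rw [← map_mul, prod, prod, Finset.mul_prod_erase _ _ hi]
  have hunit := (h.isUnit_or_isUnit hsplit).resolve_left (F.irreducible_ofPoly_poly i).not_isUnit
  refine ⟨i, ?_⟩
  rw [← Finset.insert_erase hi, F.eq_empty_of_isUnit_ofPoly_prod hunit, insert_empty_eq]

theorem rel_of_prod_associated_ofPoly_prod {s : Multiset (IntPolySubring D K)}
    (hs : ∀ g ∈ s, Irreducible g) (h : Associated s.prod (ofPoly K (F.prod S))) :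
    Multiset.Rel Associated s (S.val.map fun i => ofPoly K (F.poly i)) := by
  classical
  induction s using Multiset.induction generalizing S with
  | empty =>
    obtain rfl := F.eq_empty_of_isUnit_ofPoly_prod (associated_one_iff_isUnit.1 h.symm)
    exact .zero
  | cons g s ih =>
    obtain ⟨u, hu⟩ := h
    rw [Multiset.prod_cons, mul_assoc] at hu
    obtain ⟨T, hTS, hg, hrest⟩ := F.exists_associated_of_mul_eq_ofPoly_prod hu
    obtain ⟨i, rfl⟩ := F.exists_eq_singleton_of_irreducible_ofPoly_prod
      (hg.irreducible (hs g (Multiset.mem_cons_self g s)))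
    have hrel := ih (fun g hg => hs g (Multiset.mem_cons_of_mem hg))
      ((associated_mul_unit_right _ _ u.isUnit).trans hrest)
    rw [← Finset.union_sdiff_of_subset hTS, Finset.singleton_union,
      Finset.insert_val_of_notMem (by simp), Multiset.map_cons]
    exact .cons (by simpa [prod] using hg) hrel

theorem not_associated_ofPoly_poly_divided {i : ι} (hS : F.Full S) (hi : i ∈ S) :
    ¬ Associated (ofPoly K (F.poly i)) (F.divided hS) := fun h => by
  have hdvd : F.pivot.map (algebraMap D K) * (F.poly i).map (algebraMap D K) ∣
      1 * (F.poly i).map (algebraMap D K) :=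
    calc _ ∣ F.pivot.map (algebraMap D K) * (F.prod S).map (algebraMap D K) :=
          mul_dvd_mul_left _ (Polynomial.map_dvd _ (Finset.dvd_prod_of_mem F.poly hi))
      _ ∣ (F.divided hS : K[X]) :=
          F.mul_coe_divided hS ▸ (isUnit_C.2 (algebraMap_prime_pow_ne_zero F.prime e).isUnit
            |>.mul_left_dvd.2 dvd_rfl)
      _ ∣ _ := by rw [one_mul]; exact (coe_associated h).dvd'
  exact F.irreducible_pivot.not_isUnit (isUnit_of_dvd_one
    ((mul_dvd_mul_iff_right (F.irreducible_poly i).ne_zero).1 hdvd))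

section Factorization

variable [DecidableEq ι]

/-- The factorization `divided T * ∏ i ∈ U \ T, poly i` of `divided U`. -/
noncomputable def factorization (hT : F.Full T) (U : Finset ι) : Multiset (IntPolySubring D K) :=
  F.divided hT ::ₘ (U \ T).val.map fun i => ofPoly K (F.poly i)

theorem prod_factorization (hT : F.Full T) (hU : F.Full U) (h : T ⊆ U) :
    (F.factorization hT U).prod = F.divided hU := by
  rw [factorization, Multiset.prod_cons, ← F.divided_mul_ofPoly_prod_sdiff hT hU h, prod, map_prod]
  rfl

theorem card_factorization (hT : F.Full T) (U : Finset ι) :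
    (F.factorization hT U).card = (U \ T).card + 1 := by
  rw [factorization, Multiset.card_cons, Multiset.card_map, Finset.card_val]

theorem irreducible_of_mem_factorization (hT : Minimal F.Full T) (U : Finset ι) :
    ∀ g ∈ F.factorization hT.prop U, Irreducible g := by
  intro g hg
  rcases Multiset.mem_cons.1 hg with rfl | hg
  · exact F.irreducible_divided hT
  · obtain ⟨i, -, rfl⟩ := Multiset.mem_map.1 hg
    exact F.irreducible_ofPoly_poly i

theorem subset_of_rel_factorization {hT : F.Full T} {hS : F.Full S} (hSU : S ⊆ U)
    (h : Multiset.Rel Associated (F.factorization hT U) (F.factorization hS U)) : S ⊆ T := by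
  intro i hi
  by_contra hiT
  have hmem : ofPoly K (F.poly i) ∈ F.factorization hT U := Multiset.mem_cons_of_mem
    (Multiset.mem_map_of_mem _ (Finset.mem_sdiff.2 ⟨hSU hi, hiT⟩))
  obtain ⟨g, hg, hig⟩ := Multiset.exists_mem_of_rel_of_mem h hmem
  rcases Multiset.mem_cons.1 hg with rfl | hg
  · exact F.not_associated_ofPoly_poly_divided hS hi hig
  · obtain ⟨j, hj, rfl⟩ := Multiset.mem_map.1 hg
    obtain rfl := F.eq_of_associated i j (coe_associated hig)
    exact (Finset.mem_sdiff.1 hj).2 hi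

theorem exists_minimal_rel_factorization (hU : F.Full U) {s : Multiset (IntPolySubring D K)}
    (hs : ∀ g ∈ s, Irreducible g) (hprod : s.prod = F.divided hU) :
    ∃ T ⊆ U, ∃ hT : Minimal F.Full T,
      Multiset.Rel Associated s (F.factorization hT.prop U) := by
  have hdvd := F.map_pivot_dvd_divided hU
  rw [← hprod, ← Subring.subtype_apply, map_multiset_prod] at hdvd
  obtain ⟨g, hgs, hpivot⟩ := F.irreducible_pivot.prime.exists_mem_multiset_map_dvd hdvd
  obtain ⟨t, rfl⟩ := Multiset.exists_cons_of_mem hgs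
  rw [Multiset.prod_cons] at hprod
  obtain ⟨T, hTU, hT, hg, ht⟩ := F.exists_associated_of_mul_eq_divided hU hprod hpivot
  have hmin := F.minimal_of_irreducible_divided hT
    (hg.irreducible (hs g (Multiset.mem_cons_self g t)))
  exact ⟨T, hTU, hmin, .cons hg (F.rel_of_prod_associated_ofPoly_prod
    (fun g hg => hs g (Multiset.mem_cons_of_mem hg)) ht)⟩

theorem isFactorizationList_factorization {κ : Type*} {T : κ → Finset ι}
    (hT : ∀ i, Minimal F.Full (T i)) (hTU : ∀ i, T i ⊆ U) (hinj : Function.Injective T)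
    (hexh : ∀ S ⊆ U, Minimal F.Full S → ∃ i, T i = S) (hU : F.Full U) :
    IsFactorizationList (F.divided hU) fun i => F.factorization (hT i).prop U where
  irreducible i := F.irreducible_of_mem_factorization (hT i) U
  prod_eq i := F.prod_factorization (hT i).prop hU (hTU i)
  not_rel i j hij h := hij <| hinj <|
    ((hT i).eq_of_le (hT j).prop (F.subset_of_rel_factorization (hTU j) h)).symm
  exists_rel s hs hprod := by
    obtain ⟨S, hSU, hS, hrel⟩ := F.exists_minimal_rel_factorization hU hs hprod
    obtain ⟨i, rfl⟩ := hexh S hSU hS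
    exact ⟨i, hrel⟩

end Factorization

end PivotFamily

section Knapsack

theorem minimal_compl_iff_maximal_of_compl_iff {α : Type*} [BooleanAlgebra α] {P Q : α → Prop}
    (hPQ : ∀ a, P aᶜ ↔ Q a) {a : α} : Minimal P aᶜ ↔ Maximal Q a := by
  refine and_congr (hPQ a) ⟨fun h b hb hab => ?_, fun h b hb hba => ?_⟩
  · exact compl_le_compl_iff_le.1 (h ((hPQ b).2 hb) (compl_le_compl hab))
  · rw [← compl_compl b, hPQ] at hb
    exact compl_le_of_compl_le (h hb (le_compl_of_le_compl hba))

theorem sum_two_pow_fin_lt_add_one {R r : ℕ} (hr : r ≤ R) :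
    ∑ t ∈ ({t | (t : ℕ) < r} : Finset (Fin R)), 2 ^ (t : ℕ) + 1 = 2 ^ r := by
  have hrange : (Finset.range R).filter (· < r) = Finset.range r := by
    ext t
    simp only [Finset.mem_filter, Finset.mem_range]
    omega
  rw [Finset.sum_filter, Fin.sum_univ_eq_sum_range (fun t => if t < r then 2 ^ t else 0),
    ← Finset.sum_filter, hrange, Nat.geomSum_eq le_rfl, Nat.div_one,
    Nat.sub_add_cancel Nat.one_le_two_pow]

variable {κ : Type*} (r : κ → ℕ) (R : ℕ)

/-- Weights for a knapsack of capacity `2 ^ (R + 1)`: one object which does not fit, an object for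
each `i : κ` leaving exactly the room `2 ^ r i - 1`, and the powers of two `1, 2, …, 2 ^ (R - 1)`
to fill that room. -/
def knapsackWeight : Option κ ⊕ Fin R → ℕ
  | .inl none => 2 ^ (R + 1) + 1
  | .inl (some i) => 2 ^ (R + 1) + 1 - 2 ^ r i
  | .inr t => 2 ^ (t : ℕ)

/-- The maximal packing containing the object of `i`. -/
def knapsackSet (i : κ) : Finset (Option κ ⊕ Fin R) :=
  ({some i} : Finset (Option κ)).disjSum {t | (t : ℕ) < r i}

variable {r R}

theorem card_knapsackSet {i : κ} (hi : r i ≤ R) : (knapsackSet r R i).card = r i + 1 := by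
  rw [knapsackSet, Finset.card_disjSum, Finset.card_singleton, Fin.card_filter_val_lt,
    min_eq_right hi, add_comm]

theorem knapsackSet_injective : Function.Injective (knapsackSet r R) := fun i j h => by
  have hi : (.inl (some i) : Option κ ⊕ Fin R) ∈ knapsackSet r R j := h ▸ by simp [knapsackSet]
  simpa [knapsackSet] using hi

theorem two_mul_two_pow_le {i : κ} (hi : r i ≤ R) : 2 * 2 ^ r i ≤ 2 ^ (R + 1) := by
  rw [← pow_succ']
  exact Nat.pow_le_pow_right two_pos (Nat.succ_le_succ hi)

theorem knapsackWeight_pos (hR : ∀ i, r i ≤ R) : ∀ j, 0 < knapsackWeight r R j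
  | .inl none => Nat.succ_pos _
  | .inl (some i) => by
    have := two_mul_two_pow_le (hR i)
    simp only [knapsackWeight]
    omega
  | .inr _ => Nat.two_pow_pos _

theorem sum_knapsackSet {i : κ} (hi : r i ≤ R) :
    ∑ j ∈ knapsackSet r R i, knapsackWeight r R j = 2 ^ (R + 1) := by
  have := sum_two_pow_fin_lt_add_one hi
  have := two_mul_two_pow_le hi
  simp only [knapsackSet, Finset.sum_disjSum, Finset.sum_singleton, knapsackWeight]
  omega

theorem exists_subset_knapsackSet (hR : ∀ i, r i ≤ R) (hmax : ∃ i, r i = R)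
    {W : Finset (Option κ ⊕ Fin R)} (hW : ∑ j ∈ W, knapsackWeight r R j ≤ 2 ^ (R + 1)) :
    ∃ i, W ⊆ knapsackSet r R i := by
  have hpair {j k} (hj : j ∈ W) (hk : k ∈ W) (hjk : j ≠ k) :
      knapsackWeight r R j + knapsackWeight r R k ≤ 2 ^ (R + 1) :=
    (Finset.add_le_sum (fun _ _ => Nat.zero_le _) hj hk hjk).trans hW
  have hnone : .inl none ∉ W := fun h => by
    have := (Finset.single_le_sum_of_canonicallyOrdered h).trans hW
    simp only [knapsackWeight] at this
    omega
  by_cases hsome : ∃ i, .inl (some i) ∈ W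
  · obtain ⟨i, hi⟩ := hsome
    have hri := two_mul_two_pow_le (hR i)
    refine ⟨i, ?_⟩
    rintro ((_ | j) | t) hj
    · exact (hnone hj).elim
    · by_contra hji
      have hsum := hpair hi hj (by rintro ⟨⟩; simp [knapsackSet] at hji)
      have hrj := two_mul_two_pow_le (hR j)
      simp only [knapsackWeight] at hsum
      omega
    · by_contra hti
      have hsum := hpair hi hj Sum.inl_ne_inr
      have hle : 2 ^ r i ≤ 2 ^ (t : ℕ) :=
        Nat.pow_le_pow_right two_pos (by simpa [knapsackSet] using hti)
      simp only [knapsackWeight] at hsum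
      omega
  · obtain ⟨i, rfl⟩ := hmax
    refine ⟨i, ?_⟩
    rintro ((_ | j) | t) hj
    · exact (hnone hj).elim
    · exact (hsome ⟨j, hj⟩).elim
    · simp [knapsackSet]

theorem maximal_sum_knapsackWeight_le_iff (hR : ∀ i, r i ≤ R) (hmax : ∃ i, r i = R)
    {W : Finset (Option κ ⊕ Fin R)} :
    Maximal (fun W => ∑ j ∈ W, knapsackWeight r R j ≤ 2 ^ (R + 1)) W ↔
      ∃ i, knapsackSet r R i = W := by
  constructor
  · intro hW
    obtain ⟨i, hi⟩ := exists_subset_knapsackSet hR hmax hW.prop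
    exact ⟨i, (hW.eq_of_le (sum_knapsackSet (hR i)).le hi).symm⟩
  · rintro ⟨i, rfl⟩
    refine ⟨(sum_knapsackSet (hR i)).le, fun W hW hle => ?_⟩
    obtain ⟨j, hj⟩ := exists_subset_knapsackSet hR hmax hW
    have hi : (.inl (some i) : Option κ ⊕ Fin R) ∈ knapsackSet r R j :=
      hj (hle (by simp [knapsackSet]))
    obtain rfl : i = j := by simpa [knapsackSet] using hi
    exact hj

theorem sum_sub_le_sum_compl_iff {J : Type*} [Fintype J] [DecidableEq J] (d : J → ℕ) (c : ℕ)
    (W : Finset J) : ∑ j, d j - c ≤ ∑ j ∈ Wᶜ, d j ↔ ∑ j ∈ W, d j ≤ c := by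
  have := Finset.sum_add_sum_compl W d
  omega

theorem exists_weights_minimal_iff [Fintype κ] [DecidableEq κ] [Nonempty κ] {n : κ → ℕ}
    (hn : ∀ i, 1 < n i) :
    ∃ (R : ℕ) (d : Option κ ⊕ Fin R → ℕ) (e : ℕ) (T : κ → Finset (Option κ ⊕ Fin R)),
      (∀ j, d j ≠ 0) ∧ e ≠ 0 ∧ Function.Injective T ∧
      (∀ S, Minimal (fun S => e ≤ ∑ j ∈ S, d j) S ↔ ∃ i, T i = S) ∧
      ∀ i, (T i)ᶜ.card + 1 = n i := by
  let r : κ → ℕ := fun i => n i - 2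
  obtain ⟨i₀, hi₀⟩ : ∃ i₀, ∀ i, r i ≤ r i₀ := Finite.exists_max r
  let d := knapsackWeight r (r i₀)
  refine ⟨r i₀, d, ∑ j, d j - 2 ^ (r i₀ + 1), fun i => (knapsackSet r (r i₀) i)ᶜ,
    fun j => (knapsackWeight_pos hi₀ j).ne', ?_,
    compl_injective.comp knapsackSet_injective, fun S => ?_, fun i => ?_⟩
  · have hlarge : 2 ^ (r i₀ + 1) + 1 ≤ ∑ j, d j :=
      Finset.single_le_sum_of_canonicallyOrdered (f := d) (i := .inl none) (Finset.mem_univ _)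
    omega
  · rw [← compl_compl S, minimal_compl_iff_maximal_of_compl_iff (sum_sub_le_sum_compl_iff d _),
      maximal_sum_knapsackWeight_le_iff hi₀ ⟨i₀, rfl⟩]
    simp only [compl_inj_iff]
  · rw [compl_compl, card_knapsackSet (hi₀ i)]
    have := hn i
    simp only [r]
    omega

end Knapsack

section Residue

theorem exists_injective_prime_gt {ι : Type*} [Finite ι] (N : ℕ) :
    ∃ m : ι → ℕ, Function.Injective m ∧ ∀ i, (m i).Prime ∧ N < m i := by
  obtain ⟨l, ⟨φ⟩⟩ := Finite.exists_equiv_fin ι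
  refine ⟨fun i => Nat.nth Nat.Prime (N + φ i), fun i j hij => ?_, fun i => ⟨?_, ?_⟩⟩
  · exact φ.injective (Fin.ext (Nat.add_left_cancel
      (Nat.nth_injective Nat.infinite_setOfPred_prime hij)))
  · exact Nat.prime_nth_prime _
  · have hle : N + φ i + 2 ≤ Nat.nth Nat.Prime (N + φ i) := Nat.add_two_le_nth_prime _
    exact lt_of_lt_of_le (by omega) hle

/-- Prime exponents exceeding `e` and the weights `d`, for the polynomials of a residue family.
Those of the members of the family are distinct, so that their degrees tell them apart. -/
structure ResidueExponents (ι : Type*) {J : Type*} (d : J → ℕ) (e : ℕ) where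
  pivot : ℕ
  member : ι ⊕ J → ℕ
  prime_pivot : pivot.Prime
  prime_member : ∀ i, (member i).Prime
  lt_pivot : e < pivot
  lt_member : ∀ i, e < member i
  weight_lt_member : ∀ j, d j < member (.inr j)
  member_injective : Function.Injective member

theorem ResidueExponents.nonempty (ι : Type*) {J : Type*} [Finite ι] [Finite J] (d : J → ℕ)
    (e : ℕ) : Nonempty (ResidueExponents ι d e) := by
  cases nonempty_fintype J
  obtain ⟨q, heq, hq⟩ := Nat.exists_infinite_primes (e + 1)
  obtain ⟨m, hinj, hm⟩ := exists_injective_prime_gt (ι := ι ⊕ J) (e + ∑ j, d j)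
  refine ⟨q, m, hq, fun i => (hm i).1, heq, fun i => ?_, fun j => ?_, hinj⟩
  · exact (Nat.le_add_right _ _).trans_lt (hm i).2
  · have hdj : d j ≤ ∑ j, d j := Finset.single_le_sum_of_canonicallyOrdered (Finset.mem_univ j)
    exact (hdj.trans (Nat.le_add_left _ _)).trans_lt (hm _).2

variable {D : Type*} [CommRing D] {p : D}

theorem pow_dvd_pow_add_pow_mul {x : D} (hx : p ∣ x) {d m : ℕ} (hdm : d ≤ m) (c : D) :
    p ^ d ∣ x ^ m + p ^ d * c :=
  ((pow_dvd_pow p hdm).trans (pow_dvd_pow_of_dvd hx m)).add (dvd_mul_right _ _)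

theorem dvd_of_dvd_pow_add_prime_pow_mul (hp : Prime p) {x c : D} {d m : ℕ} (hd : d ≠ 0)
    (h : p ∣ x ^ m + p ^ d * c) : p ∣ x :=
  hp.dvd_of_dvd_pow ((dvd_add_left ((dvd_pow_self p hd).mul_right c)).1 h)

theorem dvd_one_sub_mul_iff {a b : D} : p ∣ 1 - a * b ↔
    Ideal.Quotient.mk (Ideal.span {p}) a * Ideal.Quotient.mk (Ideal.span {p}) b = 1 := by
  rw [← Ideal.Quotient.eq_zero_iff_dvd, map_sub, map_one, map_mul, sub_eq_zero, eq_comm]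

theorem isUnit_mk_of_not_dvd (hp : Prime p) [Finite (D ⧸ Ideal.span {p})] {b : D} (hb : ¬ p ∣ b) :
    IsUnit (Ideal.Quotient.mk (Ideal.span {p}) b) := by
  have : (Ideal.span {p}).IsPrime := (Ideal.span_singleton_prime hp.ne_zero).2 hp
  let _ := (Finite.isField_of_domain (D ⧸ Ideal.span {p})).toField
  exact IsUnit.mk0 _ (mt (Ideal.Quotient.eq_zero_iff_dvd p b).1 hb)

variable (p) in
/-- The units of `D / pD` other than `1`; they index the polynomials taking care of the nonzero
residue classes not handled by the pivot. -/
abbrev NonOneUnit : Type _ := {u : (D ⧸ Ideal.span {p})ˣ // u ≠ 1}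

namespace NonOneUnit

/-- A representative in `D` of a residue class. -/
noncomputable def rep (u : NonOneUnit p) : D :=
  Function.surjInv Ideal.Quotient.mk_surjective (u.1 : D ⧸ Ideal.span {p})

theorem mk_rep (u : NonOneUnit p) :
    Ideal.Quotient.mk (Ideal.span {p}) u.rep = u.1 :=
  Function.surjInv_eq Ideal.Quotient.mk_surjective _

theorem not_dvd_rep (hp : Prime p) (u : NonOneUnit p) : ¬ p ∣ u.rep := fun h => by
  have : (Ideal.span {p}).IsPrime := (Ideal.span_singleton_prime hp.ne_zero).2 hp
  exact u.1.ne_zero (u.mk_rep ▸ (Ideal.Quotient.eq_zero_iff_dvd p _).2 h)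

theorem not_dvd_one_sub_rep (u : NonOneUnit p) : ¬ p ∣ 1 - u.rep * 1 := fun h =>
  u.2 (Units.ext (by simpa [mk_rep] using dvd_one_sub_mul_iff.1 h))

end NonOneUnit

variable {J : Type*} {d : J → ℕ} {e : ℕ}

/-- The members of a residue family. The values at `b` of the one indexed by `inl u` are divisible
by `p` exactly when `b` lies in the class inverse to `u`, and then by `p ^ e`. Those of the one
indexed by `inr j` are so exactly when `p` divides `b`, and then by `p ^ d j`, the value at `0`. -/
noncomputable def residueFamilyPoly (E : ResidueExponents (NonOneUnit p) d e) :
    NonOneUnit p ⊕ J → D[X]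
  | .inl u => residuePoly (p ^ e) u.rep (E.member (.inl u))
  | .inr j => X ^ E.member (.inr j) + C (p ^ d j)

variable (E : ResidueExponents (NonOneUnit p) d e)

theorem eval_residueFamilyPoly_inl (u : NonOneUnit p) (b : D) :
    (residueFamilyPoly E (.inl u)).eval b =
      (1 - u.rep * b) ^ E.member (.inl u) + p ^ e * b ^ E.member (.inl u) :=
  eval_residuePoly _ _ _ _

theorem eval_residueFamilyPoly_inr (j : J) (b : D) :
    (residueFamilyPoly E (.inr j)).eval b = b ^ E.member (.inr j) + p ^ d j * 1 := by
  simp [residueFamilyPoly]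

theorem eval_zero_residueFamilyPoly_inl (u : NonOneUnit p) :
    (residueFamilyPoly E (.inl u)).eval 0 = 1 := by
  simp [eval_residueFamilyPoly_inl, (E.prime_member _).ne_zero]

theorem eval_zero_residueFamilyPoly_inr (j : J) :
    (residueFamilyPoly E (.inr j)).eval 0 = p ^ d j := by
  simp [eval_residueFamilyPoly_inr, (E.prime_member _).ne_zero]

theorem pow_dvd_prod_eval_residueFamilyPoly {T : Finset (NonOneUnit p ⊕ J)}
    (hsum : e ≤ ∑ j ∈ T.toRight, d j) {b : D} (hb : p ∣ b) :
    p ^ e ∣ ∏ i ∈ T, (residueFamilyPoly E i).eval b := by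
  rw [← T.toLeft_disjSum_toRight, Finset.prod_disjSum]
  refine ((pow_dvd_pow p hsum).trans ?_).mul_left _
  rw [← Finset.prod_pow_eq_pow_sum]
  refine Finset.prod_dvd_prod_of_dvd _ _ fun j _ => ?_
  rw [eval_residueFamilyPoly_inr]
  exact pow_dvd_pow_add_pow_mul hb (E.weight_lt_member j).le 1

variable [IsDomain D]

theorem natDegree_residueFamilyPoly (hp : Prime p) (he : e ≠ 0) :
    ∀ i, (residueFamilyPoly E i).natDegree = E.member i
  | .inl u => natDegree_residuePoly (neg_pow_add_prime_pow_ne_zero hp (u.not_dvd_rep hp) _ he)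
  | .inr _ => natDegree_X_pow_add_C

variable (K : Type*) [IsIntegrallyClosed D] [Field K] [Algebra D K] [IsFractionRing D K]

theorem irreducible_map_residueFamilyPoly (hp : Prime p) (he : e ≠ 0) (hd : ∀ j, d j ≠ 0) :
    ∀ i, Irreducible ((residueFamilyPoly E i).map (algebraMap D K))
  | .inl u => irreducible_map_residuePoly_prime_pow hp (E.prime_member _) he (E.lt_member _)
      (u.not_dvd_rep hp)
  | .inr j => by
    rw [residueFamilyPoly, Polynomial.map_add, Polynomial.map_pow, map_X, map_C]
    exact irreducible_X_pow_add_C_prime_pow hp (E.prime_member _) (hd j) (E.weight_lt_member j)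

/-- The family whose full sets are those containing every `inl u` and, among the `inr j`, a set of
total weight at least `e`. -/
noncomputable def residueFamily (hp : Prime p) (he : e ≠ 0) (hd : ∀ j, d j ≠ 0) :
    PivotFamily D K p e (NonOneUnit p ⊕ J) where
  pivot := residuePoly (p ^ e) 1 E.pivot
  poly := residueFamilyPoly E
  prime := hp
  irreducible_pivot := irreducible_map_residuePoly_prime_pow hp E.prime_pivot he E.lt_pivot
    hp.not_dvd_one
  irreducible_poly := irreducible_map_residueFamilyPoly E K hp he hd
  eq_of_associated i j hij := by
    have hdeg := natDegree_eq_of_degree_eq (degree_eq_degree_of_associated hij)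
    have hinj := IsFractionRing.injective D K
    rw [natDegree_map_eq_of_injective hinj, natDegree_map_eq_of_injective hinj,
      natDegree_residueFamilyPoly E hp he, natDegree_residueFamilyPoly E hp he] at hdeg
    exact E.member_injective hdeg
  eval_zero_pivot := by simp [eval_residuePoly, E.prime_pivot.ne_zero]
  eval_zero_poly
    | .inl u => eval_zero_residueFamilyPoly_inl E u ▸ one_mem _
    | .inr j => eval_zero_residueFamilyPoly_inr E j ▸ ⟨d j, rfl⟩
  eval_one_pivot := by simp [eval_residuePoly, E.prime_pivot.ne_zero]
  not_dvd_eval_one_poly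
    | .inl u => by
      rw [eval_residueFamilyPoly_inl]
      exact fun h => u.not_dvd_one_sub_rep (dvd_of_dvd_pow_add_prime_pow_mul hp he h)
    | .inr j => by
      rw [eval_residueFamilyPoly_inr]
      exact fun h => hp.not_dvd_one (dvd_of_dvd_pow_add_prime_pow_mul hp (hd j) h)

namespace residueFamily

variable {E K} {hp : Prime p} {he : e ≠ 0} {hd : ∀ j, d j ≠ 0}
  {T : Finset (NonOneUnit p ⊕ J)}

theorem inl_mem_of_full (hT : (residueFamily E K hp he hd).Full T) (u : NonOneUnit p) :
    .inl u ∈ T := by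
  obtain ⟨b, hb⟩ := Ideal.Quotient.mk_surjective u.1⁻¹.1
  have hdvd := (dvd_pow_self p he).trans (hT b)
  rw [PivotFamily.eval_pivot_mul_prod] at hdvd
  rcases hp.dvd_or_dvd hdvd with hpivot | hprod
  · have h1 : p ∣ 1 - 1 * b := dvd_of_dvd_pow_add_prime_pow_mul hp he
      (by rwa [← eval_residuePoly])
    rw [dvd_one_sub_mul_iff, hb, map_one, one_mul, Units.val_eq_one, inv_eq_one] at h1
    exact (u.2 h1).elim
  · obtain ⟨v | j, hi, hdvd⟩ := hp.exists_mem_finset_dvd hprod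
    · have hv : p ∣ 1 - v.rep * b := dvd_of_dvd_pow_add_prime_pow_mul hp he
        (by rwa [← eval_residueFamilyPoly_inl])
      rw [dvd_one_sub_mul_iff, hb, v.mk_rep, ← Units.val_mul, Units.val_eq_one,
        mul_inv_eq_one] at hv
      rwa [← Subtype.ext hv]
    · have hpb : p ∣ b := dvd_of_dvd_pow_add_prime_pow_mul hp (hd j)
        (by rwa [← eval_residueFamilyPoly_inr])
      rw [← Ideal.Quotient.eq_zero_iff_dvd, hb] at hpb
      have : (Ideal.span {p}).IsPrime := (Ideal.span_singleton_prime hp.ne_zero).2 hp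
      exact ((u.1⁻¹).ne_zero hpb).elim

theorem le_sum_of_full (hT : (residueFamily E K hp he hd).Full T) :
    e ≤ ∑ j ∈ T.toRight, d j := by
  have h0 : (residueFamily E K hp he hd).pivot.eval 0 = 1 := by
    simp [residueFamily, eval_residuePoly, E.prime_pivot.ne_zero]
  have hprod : ∏ i ∈ T, (residueFamilyPoly E i).eval 0 = p ^ ∑ j ∈ T.toRight, d j := by
    rw [← T.toLeft_disjSum_toRight, Finset.prod_disjSum, Finset.toRight_disjSum]
    simp only [eval_zero_residueFamilyPoly_inl, eval_zero_residueFamilyPoly_inr,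
      Finset.prod_const_one, one_mul, Finset.prod_pow_eq_pow_sum]
  have hdvd := hT 0
  rw [PivotFamily.eval_pivot_mul_prod, h0, one_mul] at hdvd
  exact (pow_dvd_pow_iff hp.ne_zero hp.not_isUnit).1 (hprod ▸ hdvd)

theorem full_iff [Finite (D ⧸ Ideal.span {p})] : (residueFamily E K hp he hd).Full T ↔
    (∀ u, .inl u ∈ T) ∧ e ≤ ∑ j ∈ T.toRight, d j := by
  refine ⟨fun hT => ⟨inl_mem_of_full hT, le_sum_of_full hT⟩, fun ⟨hinl, hsum⟩ b => ?_⟩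
  rw [PivotFamily.eval_pivot_mul_prod]
  by_cases hb : p ∣ b
  · exact (pow_dvd_prod_eval_residueFamilyPoly E hsum hb).mul_left _
  obtain ⟨v, hv⟩ := isUnit_mk_of_not_dvd hp hb
  by_cases hv1 : v⁻¹ = 1
  · refine Dvd.dvd.mul_right ?_ _
    rw [residueFamily, eval_residuePoly]
    refine pow_dvd_pow_add_pow_mul (dvd_one_sub_mul_iff.2 ?_) E.lt_pivot.le _
    rw [← hv, inv_eq_one.1 hv1, map_one, Units.val_one, one_mul]
  · let u : NonOneUnit p := ⟨v⁻¹, hv1⟩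
    refine Dvd.dvd.mul_left (dvd_trans ?_ (Finset.dvd_prod_of_mem _ (hinl u))) _
    rw [residueFamily, eval_residueFamilyPoly_inl]
    refine pow_dvd_pow_add_pow_mul (dvd_one_sub_mul_iff.2 ?_) (E.lt_member _).le _
    rw [u.mk_rep, ← hv, Units.inv_mul]

theorem full_disjSum_iff [Finite (D ⧸ Ideal.span {p})] [Fintype (NonOneUnit p)] {S : Finset J} :
    (residueFamily E K hp he hd).Full (Finset.univ.disjSum S) ↔ e ≤ ∑ j ∈ S, d j := by
  simp [full_iff]

theorem exists_disjSum_eq_of_full [Fintype (NonOneUnit p)]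
    (hT : (residueFamily E K hp he hd).Full T) : ∃ S : Finset J, Finset.univ.disjSum S = T := by
  have huniv : T.toLeft = Finset.univ :=
    Finset.eq_univ_of_forall fun u => Finset.mem_toLeft.2 (inl_mem_of_full hT u)
  exact ⟨T.toRight, huniv ▸ T.toLeft_disjSum_toRight⟩

theorem minimal_full_iff [Finite (D ⧸ Ideal.span {p})] [Fintype (NonOneUnit p)] :
    Minimal (residueFamily E K hp he hd).Full T ↔
      ∃ S, Minimal (fun S => e ≤ ∑ j ∈ S, d j) S ∧ Finset.univ.disjSum S = T := by
  constructor
  · intro hT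
    obtain ⟨S, rfl⟩ := exists_disjSum_eq_of_full hT.prop
    refine ⟨S, ⟨full_disjSum_iff.1 hT.prop, fun S' hS' hle => ?_⟩, rfl⟩
    have hsub := hT.le_of_le (full_disjSum_iff.2 hS') (Finset.disjSum_mono subset_rfl hle)
    simpa using Finset.toRight_subset_toRight hsub
  · rintro ⟨S, hS, rfl⟩
    refine ⟨full_disjSum_iff.2 hS.prop, fun T hT hle => ?_⟩
    obtain ⟨S', rfl⟩ := exists_disjSum_eq_of_full hT
    have hsub : S' ⊆ S := by simpa using Finset.toRight_subset_toRight hle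
    exact Finset.disjSum_mono subset_rfl (hS.le_of_le (full_disjSum_iff.1 hT) hsub)

end residueFamily

end Residue

theorem exists_isFactorizationList {D : Type*} (K : Type*) {κ : Type*} [CommRing D] [IsDomain D]
    [IsIntegrallyClosed D] [Field K] [Algebra D K] [IsFractionRing D K] {p : D} (hp : Prime p)
    [Finite (D ⧸ Ideal.span {p})] [Finite κ] [Nonempty κ] (n : κ → ℕ) (hn : ∀ i, 1 < n i) :
    ∃ (H : IntPolySubring D K) (L : κ → Multiset (IntPolySubring D K)),
      IsFactorizationList H L ∧ ∀ i, (L i).card = n i := by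
  classical
  cases nonempty_fintype κ
  cases nonempty_fintype (NonOneUnit p)
  obtain ⟨R, d, e, T, hd, he, hinj, hmin, hcard⟩ := exists_weights_minimal_iff hn
  obtain ⟨E⟩ := ResidueExponents.nonempty (NonOneUnit p) d e
  let F := residueFamily E K hp he hd
  let T' : κ → Finset (NonOneUnit p ⊕ (Option κ ⊕ Fin R)) := fun i => Finset.univ.disjSum (T i)
  have hT' : ∀ i, Minimal F.Full (T' i) := fun i =>
    residueFamily.minimal_full_iff.2 ⟨T i, (hmin _).2 ⟨i, rfl⟩, rfl⟩
  have hinj' : Function.Injective T' := fun i j hij =>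
    hinj (by simpa [T'] using congrArg Finset.toRight hij)
  have hexh : ∀ S ⊆ Finset.univ, Minimal F.Full S → ∃ i, T' i = S := fun V _ hV => by
    obtain ⟨S, hS, rfl⟩ := residueFamily.minimal_full_iff.1 hV
    obtain ⟨i, rfl⟩ := (hmin S).1 hS
    exact ⟨i, rfl⟩
  have hU : F.Full Finset.univ :=
    (hT' (Classical.arbitrary κ)).prop.mono (Finset.subset_univ _)
  refine ⟨_, _, F.isFactorizationList_factorization hT' (fun _ => Finset.subset_univ _) hinj' hexh
    hU, fun i => ?_⟩
  have hcompl : (Finset.univ \ T' i).card = (T i)ᶜ.card := by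
    rw [← Finset.compl_eq_univ_sdiff, Finset.card_compl, Finset.card_compl, Finset.card_disjSum,
      Fintype.card_sum, Finset.card_univ, Nat.add_sub_add_left]
  rw [F.card_factorization, hcompl, hcard]

theorem stmt13_general {D : Type*} (K : Type*) [CommRing D] [IsDomain D] [IsIntegrallyClosed D]
    [Field K] [Algebra D K] [IsFractionRing D K] {p : D} (hp : Prime p)
    [Finite (D ⧸ Ideal.span {p})] :
    ¬ UniqueFactorizationMonoid (IntPolySubring D K) ∧
    ∀ {κ : Type*} [Finite κ] [Nonempty κ] (n : κ → ℕ), (∀ i, 1 < n i) →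
      ∃ (H : IntPolySubring D K) (L : κ → Multiset (IntPolySubring D K)),
        IsFactorizationList H L ∧ ∀ i, (L i).card = n i := by
  refine ⟨fun _ => ?_, fun n hn => exists_isFactorizationList K hp n hn⟩
  obtain ⟨H, L, hL, -⟩ :=
    exists_isFactorizationList K hp (fun _ : Fin 2 => 2) fun _ => one_lt_two
  exact not_subsingleton (Fin 2) hL.subsingleton_of_uniqueFactorizationMonoid

/-- For a UFD `D` with a prime element `p` such that `D/pD` is finite, `Int(D)` is not a
UFD; indeed for all `1 < n_1 ≤ … ≤ n_k` there is `H ∈ Int(D)` with exactly `k` essentially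
different factorizations into irreducibles of `Int(D)`, of lengths exactly `n_1, …, n_k`. -/
theorem stmt13 (D : Type*) [CommRing D] [IsDomain D] [UniqueFactorizationMonoid D]
    (p : D) (hp : Prime p) (hfin : Finite (D ⧸ Ideal.span {p})) :
    ¬ UniqueFactorizationMonoid (IntPolySubring D (FractionRing D)) ∧
    ∀ (k : ℕ), 0 < k → ∀ n : Fin k → ℕ, (∀ i, 1 < n i) → Monotone n →
    ∃ H : IntPolySubring D (FractionRing D),
      ∃ L : Fin k → Multiset (IntPolySubring D (FractionRing D)),
        (∀ i, ∀ g ∈ L i, Irreducible g) ∧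
        (∀ i, (L i).prod = H) ∧
        (∀ i, Multiset.card (L i) = n i) ∧
        (∀ i j, i ≠ j → ¬ Multiset.Rel Associated (L i) (L j)) ∧
        (∀ s : Multiset (IntPolySubring D (FractionRing D)),
          (∀ g ∈ s, Irreducible g) → s.prod = H →
          ∃ i, Multiset.Rel Associated s (L i)) := by
  refine (stmt13_general (FractionRing D) hp).imp_right fun hexists k hk n hn _ => ?_
  have := Fin.pos_iff_nonempty.1 hk
  obtain ⟨H, L, hL, hcard⟩ := hexists n hn
  exact ⟨H, L, hL.irreducible, hL.prod_eq, hcard, hL.not_rel, hL.exists_rel⟩
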